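/- Fix integers n ≥ 0 and k ≥ 0. Consider formal monomials in variables ξ̄₁, ξ̄₂, … (arbitrary exponents in ℕ, finitely supported) and τ̄_j (exponents in {0,1}, finitely supported), where wt(ξ̄_i) = wt(τ̄_i) = 2^i, and RO(C₂)-degrees are recorded as pairs (a + bσ): |ξ̄_i| = (2^i − 1)(1 + σ) and |τ̄_i| = 2^i(1 + σ) − σ, with weight and degree additive on monomials. Then the assignment sending a monomial ξ̄₁^{a₁}ξ̄₂^{a₂}⋯ · τ̄_n^{ε_n}τ̄_{n+1}^{ε_{n+1}}⋯ (τ̄-indices ≥ n) of weight w ≤ k to the monomial ξ̄₁^{k−w} · ξ̄₂^{a₁}ξ̄₃^{a₂}⋯ · τ̄_{n+1}^{ε_n}τ̄_{n+2}^{ε_{n+1}}⋯ (all indices shifted up by one, with ξ̄₁-exponent k − w) is a bijection from the set of such monomials of weight at most k in ξ̄₁, ξ̄₂, … and τ̄_n, τ̄_{n+1}, … onto the set of monomials of weight exactly 2k in ξ̄₁, ξ̄₂, … and τ̄_{n+1}, τ̄_{n+2}, …; moreover this bijection raises the RO(C₂)-degree of every monomial by exactly kρ = k(1 + σ). -/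

import Mathlib

/-!
STATEMENT 11: the weight/degree bookkeeping for the isomorphism
Σ^{ρk} N_{n−1}(k) ≅ M_n(k) of the paper, at the level of monomial bases of the
C₂-equivariant dual Steenrod algebra.

A monomial in the generators ξ̄₁, ξ̄₂, … and τ̄₀, τ̄₁, … is encoded as a pair
(a, ε) of finitely supported functions ℕ →₀ ℕ, where `a i` is the exponent of
ξ̄_{i+1} and `ε i` is the exponent of τ̄_i (required to be ≤ 1).  Weights are
wt(ξ̄_i) = wt(τ̄_i) = 2^i, and RO(C₂)-degrees c + dσ are recorded as pairs
(c, d) ∈ ℤ × ℤ: |ξ̄_i| = (2^i − 1)(1 + σ) and |τ̄_i| = 2^i(1 + σ) − σ.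
-/

noncomputable section

/-- A formal monomial ξ̄₁^{a₀}ξ̄₂^{a₁}⋯ · τ̄₀^{ε₀}τ̄₁^{ε₁}⋯, encoded as the pair
(a, ε); the exponent of ξ̄_{i+1} is `a i` and the exponent of τ̄_i is `ε i`. -/
abbrev SteenrodMono : Type := (ℕ →₀ ℕ) × (ℕ →₀ ℕ)

/-- The weight of a monomial: wt(ξ̄_i) = wt(τ̄_i) = 2^i, additively. -/
def wt (M : SteenrodMono) : ℕ :=
  M.1.sum (fun i e => e * 2 ^ (i + 1)) + M.2.sum (fun i e => e * 2 ^ i)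

/-- The RO(C₂)-degree of a monomial, recorded as a pair (c, d) standing for
c + dσ: |ξ̄_i| = (2^i − 1) + (2^i − 1)σ and |τ̄_i| = 2^i + (2^i − 1)σ,
additively. -/
def deg (M : SteenrodMono) : ℤ × ℤ :=
  (M.1.sum (fun i e => (e : ℤ) * (2 ^ (i + 1) - 1)) +
      M.2.sum (fun i e => (e : ℤ) * 2 ^ i),
    M.1.sum (fun i e => (e : ℤ) * (2 ^ (i + 1) - 1)) +
      M.2.sum (fun i e => (e : ℤ) * (2 ^ i - 1)))

/-- Shift all indices of an exponent function up by one
(ξ̄_i ↦ ξ̄_{i+1}, τ̄_i ↦ τ̄_{i+1}). -/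
def shiftUp (g : ℕ →₀ ℕ) : ℕ →₀ ℕ :=
  Finsupp.embDomain ⟨Nat.succ, Nat.succ_injective⟩ g

/-- The assignment of STATEMENT 11: send a monomial of weight w ≤ k to the
monomial obtained by shifting every generator index up by one
(ξ̄_i ↦ ξ̄_{i+1}, τ̄_j ↦ τ̄_{j+1}) and multiplying by ξ̄₁^{k−w}. -/
def steenrodShift (k : ℕ) (M : SteenrodMono) : SteenrodMono :=
  (shiftUp M.1 + Finsupp.single 0 (k - wt M), shiftUp M.2)

/-- Monomials in ξ̄₁, ξ̄₂, … and τ̄_n, τ̄_{n+1}, … (τ̄-exponents at most 1,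
τ̄-indices at least n) of weight at most k. -/
def monoLE (n k : ℕ) : Set SteenrodMono :=
  { M | (∀ i, M.2 i ≤ 1) ∧ (∀ i, i < n → M.2 i = 0) ∧ wt M ≤ k }

/-- Monomials in ξ̄₁, ξ̄₂, … and τ̄_{n+1}, τ̄_{n+2}, … (τ̄-exponents at most 1,
τ̄-indices at least n+1) of weight exactly 2k. -/
def monoEq (n k : ℕ) : Set SteenrodMono :=
  { M | (∀ i, M.2 i ≤ 1) ∧ (∀ i, i < n + 1 → M.2 i = 0) ∧ wt M = 2 * k }

theorem shiftUp_succ (g : ℕ →₀ ℕ) (i : ℕ) : shiftUp g (i + 1) = g i :=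
  Finsupp.embDomain_apply_self ⟨Nat.succ, Nat.succ_injective⟩ g i

theorem shiftUp_zero (g : ℕ →₀ ℕ) : shiftUp g 0 = 0 := by
  apply Finsupp.embDomain_of_notMem_range
  rintro ⟨i, hi⟩
  exact Nat.succ_ne_zero i hi

theorem shiftUp_sum {A : Type*} [AddCommMonoid A] (g : ℕ →₀ ℕ) (f : ℕ → ℕ → A) :
    (shiftUp g).sum f = g.sum (fun i e => f (i + 1) e) :=
  Finsupp.sum_embDomain

/-- Shift down, forgetting the value at zero. -/
def shiftDown (g : ℕ →₀ ℕ) : ℕ →₀ ℕ :=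
  Finsupp.comapDomain Nat.succ g Nat.succ_injective.injOn

theorem shiftUp_shiftDown (g : ℕ →₀ ℕ) :
    shiftUp (shiftDown g) + Finsupp.single 0 (g 0) = g := by
  ext i
  cases i with
  | zero => simp [shiftUp_zero]
  | succ i => simp [shiftUp_succ, shiftDown]

theorem shiftUp_inj {g h : ℕ →₀ ℕ} (H : shiftUp g = shiftUp h) : g = h :=
  Finsupp.embDomain_injective _ H

theorem wt_shift (a e : ℕ →₀ ℕ) (c : ℕ) :
    wt (shiftUp a + Finsupp.single 0 c, shiftUp e) = 2 * wt (a, e) + 2 * c := by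
  unfold wt
  rw [Finsupp.sum_add_index' (by simp) (by intros; ring), shiftUp_sum, shiftUp_sum,
    Finsupp.sum_single_index (by simp)]
  simp only [Finsupp.sum, mul_add, Finset.mul_sum]
  rw [Finset.sum_congr rfl (fun i _ => show a i * 2 ^ (i + 1 + 1) = 2 * (a i * 2 ^ (i + 1)) by ring),
    Finset.sum_congr rfl (fun i _ => show e i * 2 ^ (i + 1) = 2 * (e i * 2 ^ i) by ring)]
  ring

theorem deg_shift (a e : ℕ →₀ ℕ) (c : ℕ) :
    deg (shiftUp a + Finsupp.single 0 c, shiftUp e) =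
      deg (a, e) + (((wt (a, e) + c : ℕ) : ℤ), ((wt (a, e) + c : ℕ) : ℤ)) := by
  unfold deg wt
  simp only
  rw [Finsupp.sum_add_index' (by simp) (by intros; push_cast; ring), shiftUp_sum, shiftUp_sum,
    shiftUp_sum, Finsupp.sum_single_index (by simp)]
  simp only [Finsupp.sum, Prod.mk_add_mk]
  push_cast
  have h1 : ∑ i ∈ a.support, (a i : ℤ) * (2 ^ (i + 1 + 1) - 1) =
      ∑ i ∈ a.support, (a i : ℤ) * (2 ^ (i + 1) - 1) + ∑ i ∈ a.support, (a i : ℤ) * 2 ^ (i + 1) := by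
    rw [← Finset.sum_add_distrib]
    exact Finset.sum_congr rfl (fun i _ => by ring)
  have h2 : ∑ i ∈ e.support, (e i : ℤ) * 2 ^ (i + 1) =
      ∑ i ∈ e.support, (e i : ℤ) * 2 ^ i + ∑ i ∈ e.support, (e i : ℤ) * 2 ^ i := by
    rw [← Finset.sum_add_distrib]
    exact Finset.sum_congr rfl (fun i _ => by ring)
  have h3 : ∑ i ∈ e.support, (e i : ℤ) * (2 ^ (i + 1) - 1) =
      ∑ i ∈ e.support, (e i : ℤ) * (2 ^ i - 1) + ∑ i ∈ e.support, (e i : ℤ) * 2 ^ i := by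
    rw [← Finset.sum_add_distrib]
    exact Finset.sum_congr rfl (fun i _ => by ring)
  rw [h1, h2, h3]
  ext <;> simp only <;> ring

/-- for all n ≥ 0 and k ≥ 0, the assignment
ξ̄₁^{a₁}ξ̄₂^{a₂}⋯ τ̄_n^{ε_n}τ̄_{n+1}^{ε_{n+1}}⋯ ↦
ξ̄₁^{k−w} ξ̄₂^{a₁}ξ̄₃^{a₂}⋯ τ̄_{n+1}^{ε_n}τ̄_{n+2}^{ε_{n+1}}⋯ (w the weight) is a
bijection from the monomials of weight at most k with τ̄-indices ≥ n onto the
monomials of weight exactly 2k with τ̄-indices ≥ n+1, and it raises the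
RO(C₂)-degree of every monomial by exactly kρ = k(1 + σ) = (k, k). -/
theorem steenrodShift_bijOn_and_deg (n k : ℕ) :
    Set.BijOn (steenrodShift k) (monoLE n k) (monoEq n k) ∧
      ∀ M ∈ monoLE n k, deg (steenrodShift k M) = deg M + ((k : ℤ), (k : ℤ)) := by
  refine ⟨⟨?_, ?_, ?_⟩, ?_⟩
  · rintro ⟨a, e⟩ ⟨h1, h2, h3⟩
    refine ⟨?_, ?_, ?_⟩
    · intro i
      cases i with
      | zero => simp [steenrodShift, shiftUp_zero]
      | succ i => simpa [steenrodShift, shiftUp_succ] using h1 i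
    · intro i hi
      cases i with
      | zero => simp [steenrodShift, shiftUp_zero]
      | succ i => simpa [steenrodShift, shiftUp_succ] using h2 i (by omega)
    · unfold steenrodShift
      rw [wt_shift]
      simp only at h3 ⊢
      omega
  · rintro ⟨a, e⟩ _ ⟨a₂, e₂⟩ _ H
    simp only [steenrodShift, Prod.mk.injEq] at H
    obtain ⟨Ha, He⟩ := H
    refine Prod.ext ?_ (shiftUp_inj He)
    ext i
    have := DFunLike.congr_fun Ha (i + 1)
    simpa [shiftUp_succ] using this
  · rintro ⟨b, d⟩ ⟨h1, h2, h3⟩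
    have hb := shiftUp_shiftDown b
    have hd := shiftUp_shiftDown d
    have hd0 : d 0 = 0 := h2 0 (by omega)
    rw [hd0, Finsupp.single_zero, add_zero] at hd
    have hw := wt_shift (shiftDown b) (shiftDown d) (b 0)
    rw [hb, hd, h3] at hw
    refine ⟨(shiftDown b, shiftDown d), ⟨?_, ?_, ?_⟩, ?_⟩
    · intro i
      exact h1 (i + 1)
    · intro i hi
      exact h2 (i + 1) (by omega)
    · omega
    · have hk : k - wt (shiftDown b, shiftDown d) = b 0 := by omega
      simp only [steenrodShift, hk, hb, hd]
  · rintro ⟨a, e⟩ ⟨_, _, h3⟩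
    unfold steenrodShift
    rw [deg_shift]
    simp only
    rw [Nat.add_sub_cancel' h3]

end
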